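/- arXiv:2511.01712 — 3 statements merged into one kernel-verified Lean document; each statement's English description precedes it below -/
import Mathlib

section
/- Let F be a field of characteristic p and W ⊆ F a finite 𝔽_p-subspace of F (a finite additive subgroup). Put ψ(X) = X·∏_{0≠w∈W}(1 − X/w) ∈ F[X]. Then in the rational function field F(X) the identity Σ_{w∈W} 1/(X − w) = 1/ψ(X) holds. -/
open scoped Classical

/-!
Interpolating the constant `1` at the nodes `v i` gives the partial fraction expansion
`∑ i, cᵢ / (x - v i) = 1 / ∏ i, (x - v i)`, where `cᵢ = ∏_{j ≠ i} (v i - v j)⁻¹`. When the nodes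
form a group, translating by a node permutes the differences `v i - v j`, so every `cᵢ` equals the
weight `c₀` at the node `0`. Moving `c₀` to the other side normalises the product to
`x * ∏_{w ≠ 0} (1 - x / w)`.
-/

section BarycentricWeights

variable {ι K : Type*} [Field K] {s : Finset ι} {v : ι → K}

theorem sum_nodalWeight_mul_inv_sub_eq_inv_eval_nodal (hv : Set.InjOn v s) (hs : s.Nonempty)
    {x : K} (hx : ∀ i ∈ s, x ≠ v i) :
    ∑ i ∈ s, Lagrange.nodalWeight s v i * (x - v i)⁻¹ = ((Lagrange.nodal s v).eval x)⁻¹ := by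
  refine eq_inv_of_mul_eq_one_right ?_
  simpa only [Lagrange.interpolate_one hv hs, Polynomial.eval_one, Pi.one_apply, mul_one] using
    (Lagrange.eval_interpolate_not_at_node 1 hx).symm

theorem nodalWeight_mul_eval_nodal_of_node_eq_zero {i : ι} (hi : i ∈ s) (hvi : v i = 0)
    (hv : ∀ j ∈ s.erase i, v j ≠ 0) (x : K) :
    Lagrange.nodalWeight s v i * (Lagrange.nodal s v).eval x =
      x * ∏ j ∈ s.erase i, (1 - (v j)⁻¹ * x) := by
  have factor_eq : ∀ j ∈ s.erase i, (0 - v j)⁻¹ * (x - v j) = 1 - (v j)⁻¹ * x := by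
    intro j hj
    have := hv j hj
    field_simp
    ring
  rw [Lagrange.nodalWeight, Lagrange.eval_nodal, ← Finset.mul_prod_erase s _ hi, hvi, sub_zero,
    mul_left_comm, ← Finset.prod_mul_distrib, Finset.prod_congr rfl factor_eq]

end BarycentricWeights

section AdditiveSubgroup

variable {A K : Type*} [AddGroup A] [Field K] {W : AddSubgroup A}

theorem nodalWeight_eq_nodalWeight_zero (f : A →+ K) (hW : (W : Set A).Finite) {w : A}
    (hw : w ∈ W) :
    Lagrange.nodalWeight hW.toFinset f w = Lagrange.nodalWeight hW.toFinset f 0 := by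
  refine Finset.prod_equiv (Equiv.subRight w) (fun u => ?_) (fun u _ => ?_)
  · simp [sub_eq_add_neg, W.add_mem_cancel_right (W.neg_mem hw), add_neg_eq_zero]
  · simp

theorem sum_inv_linear_eq_inv_additive_polynomial_general {f : A →+ K}
    (hW : (W : Set A).Finite) (hf : Set.InjOn f W) {x : K} (hx : ∀ w ∈ W, x ≠ f w) :
    ∑ w ∈ hW.toFinset, (x - f w)⁻¹ =
      (x * ∏ w ∈ hW.toFinset.erase 0, (1 - (f w)⁻¹ * x))⁻¹ := by
  set s := hW.toFinset
  set c := Lagrange.nodalWeight s f 0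
  have mem_s {w : A} : w ∈ s ↔ w ∈ W := hW.mem_toFinset
  have h0 : 0 ∈ s := mem_s.2 W.zero_mem
  have hinj : Set.InjOn f s := by rwa [hW.coe_toFinset]
  have hc : c ≠ 0 := Lagrange.nodalWeight_ne_zero hinj h0
  have partial_fractions :
      c * ∑ w ∈ s, (x - f w)⁻¹ = ((Lagrange.nodal s f).eval x)⁻¹ := by
    rw [← sum_nodalWeight_mul_inv_sub_eq_inv_eval_nodal hinj ⟨0, h0⟩ fun w hw => hx w (mem_s.1 hw),
      Finset.mul_sum]
    exact Finset.sum_congr rfl fun w hw => by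
      rw [nodalWeight_eq_nodalWeight_zero f hW (mem_s.1 hw)]
  have hf_ne : ∀ w ∈ s.erase 0, f w ≠ 0 := fun w hw hfw =>
    Finset.ne_of_mem_erase hw <|
      hinj (Finset.mem_of_mem_erase hw) h0 (hfw.trans (map_zero f).symm)
  rw [← nodalWeight_mul_eval_nodal_of_node_eq_zero h0 (map_zero f) hf_ne, mul_inv,
    ← partial_fractions, inv_mul_cancel_left₀ hc]

end AdditiveSubgroup

theorem ratFunc_X_ne_C {F : Type*} [Field F] (a : F) : (RatFunc.X : RatFunc F) ≠ RatFunc.C a := by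
  rw [← RatFunc.algebraMap_X, ← RatFunc.algebraMap_C]
  exact (RatFunc.algebraMap_injective F).ne (Polynomial.X_ne_C a)

/-- Let `F` be a field of characteristic `p` and `W ⊆ F` a finite additive
subgroup (an `𝔽_p`-subspace).  With `ψ(X) = X·∏_{0 ≠ w ∈ W} (1 - X/w) ∈ F[X]`, one has the
identity `∑_{w ∈ W} 1/(X - w) = 1/ψ(X)` in the rational function field `F(X)`. -/
theorem sum_inv_linear_eq_inv_additive_polynomial
    (p : ℕ) (hp : p.Prime) (F : Type) [Field F] [CharP F p]
    (W : AddSubgroup F) (hW : (W : Set F).Finite) :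
    (∑ w ∈ hW.toFinset, (RatFunc.X - RatFunc.C w)⁻¹) =
      (algebraMap (Polynomial F) (RatFunc F)
        (Polynomial.X *
          ∏ w ∈ hW.toFinset.erase 0, (1 - Polynomial.C w⁻¹ * Polynomial.X)))⁻¹ := by
  simpa using sum_inv_linear_eq_inv_additive_polynomial_general (f := RatFunc.C.toAddMonoidHom)
    hW RatFunc.C_injective.injOn fun w _ => ratFunc_X_ne_C w
end

section
/- Let F be a field of characteristic p containing 𝔽_q, W ⊆ F a finite 𝔽_q-submodule, and n an integer with n > q−1 such that n ≡ 0 (mod q) or n ≡ −1 (mod q). Then the coefficient of X^{q−1} in the Goss polynomial G_{n,W} is zero. -/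
open scoped Classical

/-!
Write `e_W` for the polynomial `X ∏_{w ≠ 0} (1 - X / w)`. It is additive with `e_W' = 1`, so
`e_W(y) - e_W(u)` is a constant multiple of `∏_w (y - w - u)`, and its logarithmic derivative in
`u` gives `∑_w 1 / (y - w - u) = 1 / (e_W(y) - e_W(u))`. At `u = 0` this says that
`t = ∑_w (y - w)⁻¹` is the inverse of `e_W(y)`; expanding `t / (1 - t e_W(u))` in powers of `u`
shows that the coefficient of `X ^ (k + 1)` in `G_{m + 1, W}` is the coefficient of `u ^ m` in
`e_W ^ k`. Finally `e_W = X + g(X ^ q)` because `e_W` is `𝔽_q`-linear, so for `k < q` the exponents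
of `e_W ^ k` are `k` itself and numbers whose residue modulo `q` is less than `k`.
-/

open Polynomial

section PowerSeries

variable {R : Type*} [CommRing R]

lemma prod_C_sub_X_mul_sum_invUnitsSub {ι : Type*} (s : Finset ι) (x : ι → Rˣ) :
    ((∏ i ∈ s, (C (x i : R) - X) : R[X]) : PowerSeries R) *
        ∑ i ∈ s, PowerSeries.invUnitsSub (x i) =
      ((-derivative (∏ i ∈ s, (C (x i : R) - X)) : R[X]) : PowerSeries R) := by
  have hderiv : -derivative (∏ i ∈ s, (C (x i : R) - X)) =
      ∑ i ∈ s, ∏ j ∈ s.erase i, (C (x j : R) - X) := by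
    simp [derivative_prod_finset]
  have hinv (i : ι) :
      ((C (x i : R) - X : R[X]) : PowerSeries R) * PowerSeries.invUnitsSub (x i) = 1 := by
    rw [mul_comm, Polynomial.coe_sub, Polynomial.coe_C, Polynomial.coe_X,
      PowerSeries.invUnitsSub_mul_sub]
  have hcoe : ((∑ i ∈ s, ∏ j ∈ s.erase i, (C (x j : R) - X) : R[X]) : PowerSeries R) =
      ∑ i ∈ s, ((∏ j ∈ s.erase i, (C (x j : R) - X) : R[X]) : PowerSeries R) :=
    map_sum coeToPowerSeries.ringHom _ _
  rw [hderiv, hcoe, Finset.mul_sum]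
  refine Finset.sum_congr rfl fun i hi => ?_
  rw [← Finset.prod_erase_mul s _ hi, Polynomial.coe_mul, mul_assoc, hinv, mul_one]

lemma coeff_eq_sum_coeff_pow_mul {f g b : PowerSeries R} (hf : PowerSeries.constantCoeff f = 0)
    (h : (1 - f) * b = g) (n : ℕ) :
    PowerSeries.coeff n b = ∑ k ∈ Finset.range (n + 1), PowerSeries.coeff n (f ^ k * g) := by
  have hgeom : b = (∑ k ∈ Finset.range (n + 1), f ^ k) * g + f ^ (n + 1) * b := by
    rw [← h, ← mul_assoc, geom_sum_mul_neg]
    ring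
  have htail : PowerSeries.coeff n (f ^ (n + 1) * b) = 0 :=
    PowerSeries.X_pow_dvd_iff.1
      ((pow_dvd_pow_of_dvd (PowerSeries.X_dvd_iff.2 hf) _).mul_right b) n n.lt_succ_self
  rw [← map_sum, ← Finset.sum_mul]
  conv_lhs => rw [hgeom, map_add, htail, add_zero]

end PowerSeries

section Expand

lemma exists_eq_X_add_expand {R : Type*} [CommRing R] {q : ℕ} {f : R[X]} (hq : 1 < q)
    (h1 : f.coeff 1 = 1) (hf : ∀ m, f.coeff m ≠ 0 → m = 1 ∨ q ∣ m) : ∃ g, f = X + expand R q g := by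
  refine ⟨contract q (f - X), ?_⟩
  ext m
  rw [coeff_add, coeff_expand (by omega), coeff_X]
  split_ifs with hm hqm hqm
  · exact absurd (Nat.le_of_dvd one_pos (hm ▸ hqm)) (by omega)
  · simp [← hm, h1]
  · rw [coeff_contract (by omega), Nat.div_mul_cancel hqm, coeff_sub, coeff_X, if_neg hm]
    ring
  · rw [add_zero]
    by_contra hne
    exact (hf m hne).elim (fun h => hm h.symm) hqm

lemma coeff_X_add_expand_pow_eq_zero {R : Type*} [CommSemiring R] {q : ℕ} (g : R[X]) {k m : ℕ}
    (hq : 0 < q) (hkm : k < m) (hk : k ≤ m % q) : ((X + expand R q g) ^ k).coeff m = 0 := by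
  rw [add_pow, finsetSum_coeff]
  refine Finset.sum_eq_zero fun a ha => ?_
  rcases (Finset.mem_range_succ_iff.1 ha).eq_or_lt with rfl | hak
  · simp [coeff_X_pow, hkm.ne']
  · have hndvd (ham : a ≤ m) : ¬q ∣ m - a := fun hdvd => by
      have hmod : a % q = m % q := (Nat.modEq_iff_dvd' ham).2 hdvd
      rw [Nat.mod_eq_of_lt (hak.trans_le (hk.trans (Nat.mod_lt m hq).le))] at hmod
      omega
    rw [← map_pow, mul_assoc, ← map_natCast (expand R q), ← map_mul, coeff_X_pow_mul',
      coeff_expand hq]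
    split_ifs with ham hdvd
    · exact absurd hdvd (hndvd ham)
    · rfl
    · rfl

end Expand

section LatticeExp

variable {R F : Type*} [Ring R] [Field F] [Module R F] (W : Submodule R F) [Fintype W]

/-- The monic polynomial whose roots are the elements of a finite module `W`, each simple. -/
noncomputable def vanishingPoly : F[X] :=
  ∏ w : W, (X - C (w : F))

variable {W} in
lemma eval_vanishingPoly_of_mem {x : F} (hx : x ∈ W) : (vanishingPoly W).eval x = 0 := by
  rw [vanishingPoly, eval_prod]
  exact Finset.prod_eq_zero (Finset.mem_univ ⟨x, hx⟩) (by simp)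

lemma coeff_one_vanishingPoly_ne_zero : (vanishingPoly W).coeff 1 ≠ 0 := by
  have hsep : (vanishingPoly W).Separable := separable_prod_X_sub_C_iff.2 Subtype.val_injective
  rw [← taylor_zero (vanishingPoly W), taylor_coeff_one]
  exact hsep.eval₂_derivative_ne_zero (RingHom.id F) (eval_vanishingPoly_of_mem W.zero_mem)

variable {W} in
lemma taylor_vanishingPoly_of_mem {w : F} (hw : w ∈ W) :
    taylor w (vanishingPoly W) = vanishingPoly W := by
  rw [vanishingPoly, taylor_apply, prod_comp]
  refine Fintype.prod_equiv (Equiv.subRight (⟨w, hw⟩ : W)) _ _ fun v => ?_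
  simp only [sub_comp, X_comp, C_comp, Equiv.subRight_apply, Submodule.coe_sub, C_sub]
  ring

/-- The polynomial `e_W(X) = X ∏_{w ≠ 0} (1 - X / w)` of a finite module `W`, encoded as the scalar
multiple of `vanishingPoly W` whose linear coefficient is `1`. -/
noncomputable def latticeExp : F[X] :=
  C ((vanishingPoly W).coeff 1)⁻¹ * vanishingPoly W

lemma coeff_zero_latticeExp : (latticeExp W).coeff 0 = 0 := by
  rw [coeff_zero_eq_eval_zero, latticeExp, eval_mul, eval_vanishingPoly_of_mem W.zero_mem, mul_zero]

lemma coeff_one_latticeExp : (latticeExp W).coeff 1 = 1 := by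
  rw [latticeExp, coeff_C_mul, inv_mul_cancel₀ (coeff_one_vanishingPoly_ne_zero W)]

lemma natDegree_latticeExp_le : (latticeExp W).natDegree ≤ Fintype.card W := by
  refine (natDegree_C_mul_le _ _).trans ((natDegree_prod_le _ _).trans ?_)
  simp

variable {W} in
lemma taylor_latticeExp_of_mem {w : F} (hw : w ∈ W) :
    taylor w (latticeExp W) = latticeExp W := by
  rw [latticeExp, taylor_mul, taylor_C, taylor_vanishingPoly_of_mem hw]

lemma hasseDeriv_latticeExp {i : ℕ} (hi : i ≠ 0) :
    hasseDeriv i (latticeExp W) = C ((latticeExp W).coeff i) := by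
  refine eq_of_degrees_lt_of_eval_index_eq (v := ((↑) : W → F)) Finset.univ
    Subtype.val_injective.injOn ?_ ?_ fun w _ => ?_
  · refine degree_le_natDegree.trans_lt ?_
    rw [Finset.card_univ, Nat.cast_lt]
    calc (hasseDeriv i (latticeExp W)).natDegree
        ≤ (latticeExp W).natDegree - i := natDegree_hasseDeriv_le _ _
      _ ≤ Fintype.card W - i := Nat.sub_le_sub_right (natDegree_latticeExp_le W) i
      _ < Fintype.card W := Nat.sub_lt Fintype.card_pos (Nat.pos_of_ne_zero hi)
  · exact degree_C_le.trans_lt (by exact_mod_cast Fintype.card_pos)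
  · rw [eval_C, ← taylor_coeff, taylor_latticeExp_of_mem w.2]

lemma derivative_latticeExp : derivative (latticeExp W) = 1 := by
  rw [← hasseDeriv_one, hasseDeriv_latticeExp W one_ne_zero, coeff_one_latticeExp, C_1]

section Algebra

variable {A : Type*} [CommRing A] [Algebra F A]

lemma aeval_add_latticeExp (x y : A) :
    aeval (x + y) (latticeExp W) = aeval x (latticeExp W) + aeval y (latticeExp W) := by
  have htaylor : taylor y ((latticeExp W).map (algebraMap F A)) =
      (latticeExp W).map (algebraMap F A) + C (aeval y (latticeExp W)) := by
    ext i
    rcases eq_or_ne i 0 with rfl | hi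
    · simp [coeff_zero_latticeExp]
    · have hmap : hasseDeriv i ((latticeExp W).map (algebraMap F A)) =
          (hasseDeriv i (latticeExp W)).map (algebraMap F A) := by
        ext
        simp [hasseDeriv_coeff]
      rw [taylor_coeff, hmap, hasseDeriv_latticeExp W hi]
      simp [coeff_C, hi]
  simpa [taylor_eval] using congrArg (eval x) htaylor

lemma aeval_sub_latticeExp (x y : A) :
    aeval (x - y) (latticeExp W) = aeval x (latticeExp W) - aeval y (latticeExp W) :=
  eq_sub_of_add_eq (by rw [← aeval_add_latticeExp, sub_add_cancel])

end Algebra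

lemma exists_eq_pow_of_coeff_latticeExp_ne_zero (p : ℕ) [Fact p.Prime] [CharP F p] {m : ℕ}
    (hm : (latticeExp W).coeff m ≠ 0) : ∃ j, m = p ^ j := by
  have hm0 : m ≠ 0 := by
    rintro rfl
    exact hm (coeff_zero_latticeExp W)
  refine ⟨_, Choose.eq_pow_multiplicity_of_choose_modEq_zero_nat (p := p) (by omega)
    fun i hi => ?_⟩
  rw [Finset.mem_Icc] at hi
  have h := congrArg (coeff · (m - i)) (hasseDeriv_latticeExp W (i := i) (by omega))
  simp only [hasseDeriv_coeff, coeff_C, if_neg (show m - i ≠ 0 by omega),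
    Nat.sub_add_cancel (show i ≤ m by omega)] at h
  rw [Nat.modEq_zero_iff_dvd, ← CharP.cast_eq_zero_iff F p]
  exact (mul_eq_zero.1 h).resolve_right hm

end LatticeExp

lemma vanishingPoly_comp_C_mul_X {R F : Type*} [CommRing R] [Field F] [Algebra R F]
    (W : Submodule R F) [Fintype W] (a : Rˣ) :
    (vanishingPoly W).comp (C (algebraMap R F a) * X) =
      C (algebraMap R F a ^ Fintype.card W) * vanishingPoly W := by
  rw [vanishingPoly, prod_comp, C_pow, ← Finset.card_univ, ← Finset.prod_const,
    ← Finset.prod_mul_distrib]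
  refine (Fintype.prod_equiv (MulAction.toPerm a) _ _ fun w => ?_).symm
  rw [sub_comp, X_comp, C_comp, mul_sub, ← C_mul, ← Algebra.smul_def, MulAction.toPerm_apply,
    Units.smul_def, Submodule.coe_smul]

lemma algebraMap_pow_eq_of_coeff_latticeExp_ne_zero {R F : Type*} [CommRing R] [Field F]
    [Algebra R F] (W : Submodule R F) [Fintype W] (a : Rˣ) {m : ℕ}
    (hm : (latticeExp W).coeff m ≠ 0) : algebraMap R F a ^ m = algebraMap R F a := by
  have hscale : (latticeExp W).comp (C (algebraMap R F a) * X) =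
      C (algebraMap R F a ^ Fintype.card W) * latticeExp W := by
    rw [latticeExp, mul_comp, C_comp, vanishingPoly_comp_C_mul_X, mul_left_comm]
  have hpow (k : ℕ) (hk : (latticeExp W).coeff k ≠ 0) :
      algebraMap R F a ^ k = algebraMap R F a ^ Fintype.card W := by
    have h := congrArg (coeff · k) hscale
    simp only [comp_C_mul_X_coeff, coeff_C_mul] at h
    exact mul_left_cancel₀ hk (h.trans (mul_comm _ _))
  have h1 : (latticeExp W).coeff 1 ≠ 0 := by
    rw [coeff_one_latticeExp]
    exact one_ne_zero
  rw [hpow m hm, ← hpow 1 h1, pow_one]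

lemma eq_one_or_card_dvd_of_forall_pow_eq {K : Type*} [Field K] [Fintype K] (p : ℕ)
    [CharP K p] {j : ℕ} (h : ∀ a : Kˣ, a ^ p ^ j = a) : p ^ j = 1 ∨ Fintype.card K ∣ p ^ j := by
  obtain ⟨f, hp, hq⟩ := FiniteField.card K p
  rcases le_or_gt (f : ℕ) j with hfj | hjf
  · exact Or.inr (hq ▸ pow_dvd_pow p hfj)
  · have hlt : p ^ j < Fintype.card K := hq ▸ Nat.pow_lt_pow_right hp.one_lt hjf
    have hpos : 0 < p ^ j := pow_pos hp.pos j
    have hdvd : Fintype.card K - 1 ∣ p ^ j - 1 := by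
      refine (FiniteField.forall_pow_eq_one_iff K _).1 fun a => ?_
      have ha := h a
      rwa [← Nat.sub_add_cancel hpos, pow_succ, mul_eq_right] at ha
    have := Nat.eq_zero_of_dvd_of_lt hdvd (by omega)
    omega

lemma exists_latticeExp_eq_X_add_expand {K F : Type*} [Field K] [Fintype K] [Field F] [Algebra K F]
    (W : Submodule K F) [Fintype W] :
    ∃ g, latticeExp W = X + expand F (Fintype.card K) g := by
  refine exists_eq_X_add_expand Fintype.one_lt_card (coeff_one_latticeExp W) fun m hm => ?_
  obtain ⟨p, _, _, hp, _⟩ := FiniteField.card' K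
  have : Fact p.Prime := ⟨hp⟩
  have : CharP F p := charP_of_injective_algebraMap (algebraMap K F).injective p
  obtain ⟨j, rfl⟩ := exists_eq_pow_of_coeff_latticeExp_ne_zero W p hm
  refine eq_one_or_card_dvd_of_forall_pow_eq p fun a => Units.ext <| (algebraMap K F).injective ?_
  simpa using algebraMap_pow_eq_of_coeff_latticeExp_ne_zero W a hm

section GossPolynomial

variable {R F : Type*} [Ring R] [Field F] [Module R F] (W : Submodule R F) [Fintype W]

/-- The Goss polynomial `G_{m + 1, W}`, given by the coefficients of the powers of `e_W`. The index
is shifted by one: `gossPolynomialSucc W m` expresses the power sum of exponent `m + 1`. -/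
noncomputable def gossPolynomialSucc (m : ℕ) : F[X] :=
  ∑ k ∈ Finset.range (m + 1), monomial (k + 1) ((latticeExp W ^ k).coeff m)

lemma coeff_zero_gossPolynomialSucc (m : ℕ) : (gossPolynomialSucc W m).coeff 0 = 0 := by
  simp [gossPolynomialSucc, coeff_monomial]

lemma coeff_succ_gossPolynomialSucc {k m : ℕ} (hk : k ≤ m) :
    (gossPolynomialSucc W m).coeff (k + 1) = (latticeExp W ^ k).coeff m := by
  simp [gossPolynomialSucc, coeff_monomial, hk]

variable {L : Type*} [Field L] [Algebra F L] {y : L}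

lemma C_aeval_sub_map_latticeExp_mul_sum_invUnitsSub (x : W → Lˣ)
    (hx : ∀ w : W, (x w : L) = y - algebraMap F L w) :
    ((C (aeval y (latticeExp W)) - (latticeExp W).map (algebraMap F L) : L[X]) : PowerSeries L) *
      ∑ w : W, PowerSeries.invUnitsSub (x w) = 1 := by
  have hsub : C (aeval y (latticeExp W)) - (latticeExp W).map (algebraMap F L) =
      aeval (C y - X : L[X]) (latticeExp W) := by
    rw [aeval_sub_latticeExp, aeval_X_left_eq_map, ← algebraMap_eq, aeval_algebraMap_apply]
  have hprod : ∃ c, aeval (C y - X : L[X]) (latticeExp W) = C c * ∏ w : W, (C (x w : L) - X) := by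
    refine ⟨algebraMap F L ((vanishingPoly W).coeff 1)⁻¹, ?_⟩
    rw [latticeExp, vanishingPoly, map_mul (aeval _), aeval_C, map_prod (aeval _),
      Polynomial.algebraMap_apply]
    congr 1
    refine Finset.prod_congr rfl fun w _ => ?_
    rw [map_sub, aeval_X, aeval_C, hx, C_sub]
    exact sub_right_comm _ _ _
  have hderiv : -derivative (aeval (C y - X : L[X]) (latticeExp W)) = 1 := by
    rw [← hsub]
    simp [derivative_map, derivative_latticeExp]
  obtain ⟨c, hc⟩ := hprod
  rw [hsub, hc, Polynomial.coe_mul, mul_assoc, prod_C_sub_X_mul_sum_invUnitsSub,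
    ← Polynomial.coe_mul, mul_neg, ← derivative_C_mul, ← hc, hderiv, Polynomial.coe_one]

lemma aeval_latticeExp_mul_sum_inv (hy : ∀ w : W, y - algebraMap F L w ≠ 0) :
    aeval y (latticeExp W) * ∑ w : W, (y - algebraMap F L w)⁻¹ = 1 := by
  have h := congrArg (PowerSeries.coeff 0)
    (C_aeval_sub_map_latticeExp_mul_sum_invUnitsSub W (fun w => Units.mk0 _ (hy w)) fun _ => rfl)
  rw [PowerSeries.coeff_mul, Finset.Nat.antidiagonal_zero, Finset.sum_singleton,
    Polynomial.coeff_coe] at h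
  simpa [coeff_zero_latticeExp] using h

lemma sum_inv_pow_eq_aeval_gossPolynomialSucc (hy : ∀ w : W, y - algebraMap F L w ≠ 0) (m : ℕ) :
    ∑ w : W, (y - algebraMap F L w)⁻¹ ^ (m + 1) =
      aeval (∑ w : W, (y - algebraMap F L w)⁻¹) (gossPolynomialSucc W m) := by
  have hinv := aeval_latticeExp_mul_sum_inv W hy
  set t := ∑ w : W, (y - algebraMap F L w)⁻¹
  set b : PowerSeries L := ∑ w : W, PowerSeries.invUnitsSub (Units.mk0 _ (hy w)) with hb
  set f : L[X] := C t * (latticeExp W).map (algebraMap F L) with hf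
  have hf0 : PowerSeries.constantCoeff (f : PowerSeries L) = 0 := by
    rw [← PowerSeries.coeff_zero_eq_constantCoeff_apply, Polynomial.coeff_coe, hf, coeff_C_mul,
      coeff_map, coeff_zero_latticeExp, map_zero, mul_zero]
  have hfb : (1 - (f : PowerSeries L)) * b = PowerSeries.C t := by
    have hfactor : 1 - f =
        C t * (C (aeval y (latticeExp W)) - (latticeExp W).map (algebraMap F L)) := by
      rw [mul_sub, ← C_mul, mul_comm t, hinv, C_1]
    rw [← Polynomial.coe_one, ← Polynomial.coe_sub, hfactor, Polynomial.coe_mul, mul_assoc,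
      C_aeval_sub_map_latticeExp_mul_sum_invUnitsSub W _ fun _ => rfl, mul_one, Polynomial.coe_C]
  calc ∑ w : W, (y - algebraMap F L w)⁻¹ ^ (m + 1)
      = PowerSeries.coeff m b := by simp [hb, divp]
    _ = ∑ k ∈ Finset.range (m + 1),
          PowerSeries.coeff m ((f : PowerSeries L) ^ k * PowerSeries.C t) :=
      coeff_eq_sum_coeff_pow_mul hf0 hfb m
    _ = aeval t (gossPolynomialSucc W m) := by
      rw [gossPolynomialSucc, map_sum (aeval t)]
      refine Finset.sum_congr rfl fun k _ => ?_
      rw [PowerSeries.coeff_mul_C, ← Polynomial.coe_pow, Polynomial.coeff_coe, hf, mul_pow, ← C_pow,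
        coeff_C_mul, ← Polynomial.map_pow, coeff_map, aeval_monomial]
      ring

lemma sub_algebraMap_ne_zero_of_transcendental (hy : Transcendental F y) (x : F) :
    y - algebraMap F L x ≠ 0 :=
  sub_ne_zero.2 fun h => hy (h ▸ isAlgebraic_algebraMap x)

lemma transcendental_sum_inv (hy : Transcendental F y) :
    Transcendental F (∑ w : W, (y - algebraMap F L w)⁻¹) := by
  have hdeg : (latticeExp W).natDegree ≠ 0 := fun h => by
    have h1 := coeff_one_latticeExp W
    rw [coeff_eq_zero_of_natDegree_lt (by omega)] at h1
    exact zero_ne_one h1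
  have hinv := aeval_latticeExp_mul_sum_inv W fun w =>
    sub_algebraMap_ne_zero_of_transcendental hy w
  rw [← inv_eq_of_mul_eq_one_right hinv, Transcendental, IsAlgebraic.inv_iff]
  exact hy.aeval _ hdeg <| mem_nonZeroDivisors_of_ne_zero <| leadingCoeff_ne_zero.2 fun h =>
    hdeg (by rw [h, natDegree_zero])

lemma eq_gossPolynomialSucc (hy : Transcendental F y) {m : ℕ} {G : F[X]}
    (hG : ∑ w : W, (y - algebraMap F L w)⁻¹ ^ (m + 1) =
      aeval (∑ w : W, (y - algebraMap F L w)⁻¹) G) : G = gossPolynomialSucc W m :=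
  transcendental_iff_injective.1 (transcendental_sum_inv W hy) <|
    hG.symm.trans (sum_inv_pow_eq_aeval_gossPolynomialSucc W (fun w =>
      sub_algebraMap_ne_zero_of_transcendental hy w) m)

end GossPolynomial

lemma coeff_gossPolynomialSucc_eq_zero {K F : Type*} [Field K] [Fintype K] [Field F] [Algebra K F]
    (W : Submodule K F) [Fintype W] {k m : ℕ} (hkm : k < m) (hk : k ≤ m % Fintype.card K) :
    (gossPolynomialSucc W m).coeff (k + 1) = 0 := by
  obtain ⟨g, hg⟩ := exists_latticeExp_eq_X_add_expand W
  rw [coeff_succ_gossPolynomialSucc W hkm.le, hg,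
    coeff_X_add_expand_pow_eq_zero g Fintype.card_pos hkm hk]

lemma sub_one_le_pred_mod_add_one {n q : ℕ} (hn : n ≠ 0)
    (h : n % q = 0 ∨ (n + 1) % q = 0) : q - 1 ≤ (n - 1) % q + 1 := by
  obtain ⟨m, rfl⟩ := Nat.exists_eq_add_one_of_ne_zero hn
  by_contra! hlt
  rw [Nat.add_sub_cancel] at hlt
  have h1 : (m + 1) % q = m % q + 1 := by
    rw [← Nat.mod_add_mod, Nat.mod_eq_of_lt (by omega)]
  have h2 : (m + 1 + 1) % q = m % q + 2 := by
    rw [add_assoc, ← Nat.mod_add_mod, Nat.mod_eq_of_lt (by omega)]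
  omega

theorem goss_polynomial_no_q_sub_one_term_general {K F L : Type*} [Field K] [Fintype K] [Field F]
    [Algebra K F] [Field L] [Algebra F L] (W : Submodule K F) (hW : (W : Set F).Finite)
    {y : L} (hy : Transcendental F y) {n k : ℕ} (hkn : k < n)
    (hk : k ≤ (n - 1) % Fintype.card K + 1) {G : F[X]}
    (hG : ∑ w ∈ hW.toFinset, (y - algebraMap F L w)⁻¹ ^ n =
      aeval (∑ w ∈ hW.toFinset, (y - algebraMap F L w)⁻¹) G) :
    G.coeff k = 0 := by
  have : Fintype W := hW.fintype
  obtain ⟨m, rfl⟩ := Nat.exists_eq_add_one_of_ne_zero (Nat.ne_zero_of_lt hkn)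
  simp only [Finset.sum_subtype hW.toFinset fun _ => hW.mem_toFinset] at hG
  rw [eq_gossPolynomialSucc W hy hG]
  cases k with
  | zero => exact coeff_zero_gossPolynomialSucc W m
  | succ k =>
    exact coeff_gossPolynomialSucc_eq_zero W (Nat.lt_of_succ_lt_succ hkn)
      (Nat.le_of_succ_le_succ hk)

/-- Let `F` be a field of characteristic `p` containing `𝔽_q`, `W ⊆ F` a
finite `𝔽_q`-submodule, and `n > q - 1` with `n ≡ 0` or `n ≡ -1 (mod q)`.  Then the
coefficient of `X^(q-1)` in the `n`-th Goss polynomial `G_{n,W}` vanishes, where `G_{n,W}`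
is characterized by `∑_{w ∈ W} (z-w)^{-n} = G_{n,W}(∑_{w ∈ W} (z-w)^{-1})` in `F(z)`. -/
theorem goss_polynomial_no_q_sub_one_term
    (p : ℕ) (hp : p.Prime)
    (Fq : Type) [Field Fq] [Fintype Fq] [CharP Fq p]
    (F : Type) [Field F] [CharP F p] [Algebra Fq F]
    (W : Submodule Fq F) (hW : (W : Set F).Finite)
    (n : ℕ) (hn : Fintype.card Fq - 1 < n)
    (hmod : n % Fintype.card Fq = 0 ∨ (n + 1) % Fintype.card Fq = 0)
    (G : Polynomial F)
    (hG : (∑ w ∈ hW.toFinset, ((RatFunc.X - RatFunc.C w)⁻¹) ^ n) =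
      Polynomial.aeval (∑ w ∈ hW.toFinset, (RatFunc.X - RatFunc.C w)⁻¹) G) :
    G.coeff (Fintype.card Fq - 1) = 0 :=
  goss_polynomial_no_q_sub_one_term_general W hW RatFunc.transcendental_X hn
    (sub_one_le_pred_mod_add_one (Nat.ne_zero_of_lt hn) hmod) hG
end

section
/- Fix integers q ≥ 2, r ≥ 2, and j with 2 ≤ j ≤ r. For an integer d ≥ 1 let R_d = {q^{rd} − q^{rd−1}, q^{rd} − q^{rd−2}, …, q^{rd} − q^{rd−(j−1)}}. Then every natural number k admits at most one representation k = a₁ + a₂ + … + a_s with integers d₁ > d₂ > … > d_s ≥ 1 and a_t ∈ R_{d_t} for 1 ≤ t ≤ s; i.e. if k = Σ_{t=1}^s a_t = Σ_{t=1}^{s'} a'_t with d₁ > … > d_s ≥ 1, d'₁ > … > d'_{s'} ≥ 1, a_t ∈ R_{d_t}, a'_t ∈ R_{d'_t}, then s = s' and d_t = d'_t, a_t = a'_t for all t. -/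
/-!
The digit sets `R_d` are so spread out that `k` determines its leading summand. Every element of
`R_d` is at least `q ^ (r * (d - 1))`, distinct elements differ by at least that much, and adding
that much to an element does not lead beyond `q ^ (r * d)`. By induction, summands from levels
below `d` add up to less than `q ^ (r * (d - 1))`, so they cannot make up for a smaller leading
summand. Subtracting the leading summand and repeating the argument recovers the whole
representation.
-/

/-- A family of digit sets `R d`, indexed by levels `d`, in which the gap `g d` separates the
digits of level `d` from each other, from zero, and from the gaps of higher levels. This is what
makes a sum of digits from distinct levels determine its digits; for the digit sets of the paper,
`g d = q ^ (r * (d - 1))`. -/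
structure IsSeparatedDigitSystem {ι M : Type*} [LT ι] [AddZeroClass M] [Preorder M]
    (R : ι → Set M) (g : ι → M) : Prop where
  gap_pos : ∀ d, 0 < g d
  gap_le_of_mem : ∀ {d a}, a ∈ R d → g d ≤ a
  add_gap_le_gap : ∀ {d d' a}, a ∈ R d → d < d' → a + g d ≤ g d'
  add_gap_le_of_lt : ∀ {d a a'}, a ∈ R d → a' ∈ R d → a < a' → a + g d ≤ a'

/-- The terms `a 0, …, a (s - 1)` are digits of the strictly decreasing levels
`d 0, …, d (s - 1)`. The values of `d` and `a` from `s` on are irrelevant. -/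
structure IsDigitExpansion {ι M : Type*} [Preorder ι]
    (R : ι → Set M) (s : ℕ) (d : ℕ → ι) (a : ℕ → M) : Prop where
  strictAntiOn : StrictAntiOn d (Set.Iio s)
  mem : ∀ t < s, a t ∈ R (d t)

namespace IsDigitExpansion

variable {ι M : Type*} [Preorder ι] {R : ι → Set M} {s : ℕ} {d : ℕ → ι} {a : ℕ → M}

theorem tail (h : IsDigitExpansion R (s + 1) d a) :
    IsDigitExpansion R s (fun t ↦ d (t + 1)) (fun t ↦ a (t + 1)) where
  strictAntiOn _ ht _ ht' htt' :=
    h.strictAntiOn (Nat.succ_lt_succ ht) (Nat.succ_lt_succ ht') (Nat.succ_lt_succ htt')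
  mem t ht := h.mem (t + 1) (Nat.succ_lt_succ ht)

theorem level_succ_lt_level_zero (h : IsDigitExpansion R (s + 1) d a) {t : ℕ} (ht : t < s) :
    d (t + 1) < d 0 :=
  h.strictAntiOn s.succ_pos (Nat.succ_lt_succ ht) t.succ_pos

end IsDigitExpansion

namespace IsSeparatedDigitSystem

section Gap

variable {ι M : Type*} [LT ι] [AddZeroClass M] [Preorder M] {R : ι → Set M} {g : ι → M}

theorem pos_of_mem (hR : IsSeparatedDigitSystem R g) {d : ι} {a : M} (ha : a ∈ R d) : 0 < a :=
  (hR.gap_pos d).trans_le (hR.gap_le_of_mem ha)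

theorem add_gap_le_of_toLex_lt (hR : IsSeparatedDigitSystem R g) {d d' : ι} {a a' : M}
    (ha : a ∈ R d) (ha' : a' ∈ R d') (hlt : toLex (d, a) < toLex (d', a')) : a + g d ≤ a' := by
  obtain hd | ⟨rfl, haa'⟩ := Prod.Lex.toLex_lt_toLex.mp hlt
  · exact (hR.add_gap_le_gap ha hd).trans (hR.gap_le_of_mem ha')
  · exact hR.add_gap_le_of_lt ha ha' haa'

end Gap

section Ordered

variable {ι M : Type*} [Preorder ι] [AddCommMonoid M] [PartialOrder M]
  [IsOrderedCancelAddMonoid M] {R : ι → Set M} {g : ι → M}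

theorem add_lt_add_of_toLex_lt (hR : IsSeparatedDigitSystem R g) {d d' : ι} {a a' x x' : M}
    (ha : a ∈ R d) (ha' : a' ∈ R d') (hx : x < g d) (hx' : 0 ≤ x')
    (hlt : toLex (d, a) < toLex (d', a')) : a + x < a' + x' :=
  calc a + x < a + g d := by gcongr
    _ ≤ a' := hR.add_gap_le_of_toLex_lt ha ha' hlt
    _ ≤ a' + x' := le_add_of_nonneg_right hx'

variable {s : ℕ} {d : ℕ → ι} {a : ℕ → M}

theorem sum_nonneg (hR : IsSeparatedDigitSystem R g) (h : IsDigitExpansion R s d a) :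
    0 ≤ ∑ t ∈ Finset.range s, a t :=
  Finset.sum_nonneg fun t ht ↦ (hR.pos_of_mem (h.mem t (Finset.mem_range.mp ht))).le

theorem sum_pos (hR : IsSeparatedDigitSystem R g) (h : IsDigitExpansion R (s + 1) d a) :
    0 < ∑ t ∈ Finset.range (s + 1), a t :=
  Finset.sum_pos (fun t ht ↦ hR.pos_of_mem (h.mem t (Finset.mem_range.mp ht)))
    Finset.nonempty_range_add_one

theorem sum_lt_gap (hR : IsSeparatedDigitSystem R g) (h : IsDigitExpansion R s d a) {e : ι}
    (he : ∀ t < s, d t < e) : ∑ t ∈ Finset.range s, a t < g e := by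
  induction s generalizing d a e with
  | zero => simpa using hR.gap_pos e
  | succ s ih =>
    have htail : ∑ t ∈ Finset.range s, a (t + 1) < g (d 0) :=
      ih h.tail fun _ ↦ h.level_succ_lt_level_zero
    calc ∑ t ∈ Finset.range (s + 1), a t = a 0 + ∑ t ∈ Finset.range s, a (t + 1) := by
          rw [Finset.sum_range_succ', add_comm]
      _ < a 0 + g (d 0) := by gcongr
      _ ≤ g e := hR.add_gap_le_gap (h.mem 0 s.succ_pos) (he 0 s.succ_pos)

end Ordered

section Unique

variable {ι M : Type*} [LinearOrder ι] [AddCommMonoid M] [LinearOrder M]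
  [IsOrderedCancelAddMonoid M] {R : ι → Set M} {g : ι → M}

theorem eq_of_add_eq_add (hR : IsSeparatedDigitSystem R g) {d d' : ι} {a a' x x' : M}
    (ha : a ∈ R d) (ha' : a' ∈ R d') (hx₀ : 0 ≤ x) (hx : x < g d) (hx₀' : 0 ≤ x')
    (hx' : x' < g d') (heq : a + x = a' + x') : d = d' ∧ a = a' := by
  obtain hlt | heq' | hgt := lt_trichotomy (toLex (d, a)) (toLex (d', a'))
  · exact absurd heq (hR.add_lt_add_of_toLex_lt ha ha' hx hx₀' hlt).ne
  · exact Prod.ext_iff.mp (toLex_inj.mp heq')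
  · exact absurd heq (hR.add_lt_add_of_toLex_lt ha' ha hx' hx₀ hgt).ne'

variable {s s' : ℕ} {d d' : ℕ → ι} {a a' : ℕ → M}

theorem leading_eq_of_sum_eq (hR : IsSeparatedDigitSystem R g)
    (h : IsDigitExpansion R (s + 1) d a) (h' : IsDigitExpansion R (s' + 1) d' a')
    (hsum : ∑ t ∈ Finset.range (s + 1), a t = ∑ t ∈ Finset.range (s' + 1), a' t) :
    d 0 = d' 0 ∧ a 0 = a' 0 := by
  rw [Finset.sum_range_succ', Finset.sum_range_succ', add_comm, add_comm _ (a' 0)] at hsum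
  exact hR.eq_of_add_eq_add (h.mem 0 s.succ_pos) (h'.mem 0 s'.succ_pos)
    (hR.sum_nonneg h.tail) (hR.sum_lt_gap h.tail fun _ ↦ h.level_succ_lt_level_zero)
    (hR.sum_nonneg h'.tail) (hR.sum_lt_gap h'.tail fun _ ↦ h'.level_succ_lt_level_zero) hsum

theorem eq_of_sum_eq (hR : IsSeparatedDigitSystem R g) (h : IsDigitExpansion R s d a)
    (h' : IsDigitExpansion R s' d' a')
    (hsum : ∑ t ∈ Finset.range s, a t = ∑ t ∈ Finset.range s', a' t) :
    s = s' ∧ ∀ t < s, d t = d' t ∧ a t = a' t := by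
  induction s generalizing s' d a d' a' with
  | zero =>
    cases s' with
    | zero => simp
    | succ s' => exact absurd hsum (hR.sum_pos h').ne
  | succ s ih =>
    cases s' with
    | zero => exact absurd hsum (hR.sum_pos h).ne'
    | succ s' =>
      have hlead := hR.leading_eq_of_sum_eq h h' hsum
      rw [Finset.sum_range_succ', Finset.sum_range_succ', hlead.2] at hsum
      obtain ⟨rfl, htail⟩ := ih h.tail h'.tail (add_right_cancel hsum)
      exact ⟨rfl, Nat.forall_lt_succ_left.mpr ⟨hlead, htail⟩⟩

end Unique

end IsSeparatedDigitSystem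

/-- The differences `q ^ (r * d) - q ^ n` with `r * (d - 1) ≤ n < r * d`: the set `R_d` of the
paper for `j = r + 1`, with `n` in place of `r * d - m`. For `d = 0` there is no such `n` and the
set is empty. -/
def powDiffDigits (q r d : ℕ) : Set ℕ :=
  {a | ∃ n, r * (d - 1) ≤ n ∧ n < r * d ∧ a + q ^ n = q ^ (r * d)}

theorem pow_sub_pow_mem_powDiffDigits {q r d m : ℕ} (hq : 0 < q) (hd : 1 ≤ d) (hm : 1 ≤ m)
    (hmr : m ≤ r) : q ^ (r * d) - q ^ (r * d - m) ∈ powDiffDigits q r d := by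
  have hr : r ≤ r * d := Nat.le_mul_of_pos_right r hd
  refine ⟨r * d - m, ?_, by omega, Nat.sub_add_cancel (Nat.pow_le_pow_right hq (Nat.sub_le _ _))⟩
  rw [Nat.mul_sub_one]
  omega

theorem two_mul_pow_le_pow_of_lt {q m n : ℕ} (hq : 2 ≤ q) (h : m < n) : 2 * q ^ m ≤ q ^ n :=
  calc 2 * q ^ m ≤ q * q ^ m := Nat.mul_le_mul_right _ hq
    _ = q ^ (m + 1) := (pow_succ' q m).symm
    _ ≤ q ^ n := Nat.pow_le_pow_right (by omega) h

theorem isSeparatedDigitSystem_powDiffDigits {q : ℕ} (hq : 2 ≤ q) (r : ℕ) :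
    IsSeparatedDigitSystem (powDiffDigits q r) (fun d ↦ q ^ (r * (d - 1))) where
  gap_pos _ := Nat.pow_pos (by omega)
  gap_le_of_mem := by
    rintro d a ⟨n, hgap, hn, ha⟩
    have hgap_le : q ^ (r * (d - 1)) ≤ q ^ n := Nat.pow_le_pow_right (by omega) hgap
    have htwo : 2 * q ^ n ≤ q ^ (r * d) := two_mul_pow_le_pow_of_lt hq hn
    omega
  add_gap_le_gap := by
    rintro d d' a ⟨n, hgap, -, ha⟩ hd
    calc a + q ^ (r * (d - 1)) ≤ a + q ^ n := by gcongr; omega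
      _ = q ^ (r * d) := ha
      _ ≤ q ^ (r * (d' - 1)) := by gcongr <;> omega
  add_gap_le_of_lt := by
    rintro d a a' ⟨n, -, -, ha⟩ ⟨n', hgap', -, ha'⟩ haa'
    have hn : n' < n := (Nat.pow_lt_pow_iff_right (a := q) (by omega)).mp (by omega)
    have hgap_le : q ^ (r * (d - 1)) ≤ q ^ n' := Nat.pow_le_pow_right (by omega) hgap'
    have htwo : 2 * q ^ n' ≤ q ^ n := two_mul_pow_le_pow_of_lt hq hn
    omega

theorem isDigitExpansion_powDiffDigits {q r j s : ℕ} {d a : ℕ → ℕ} (hq : 0 < q)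
    (hjr : j ≤ r + 1) (hmono : ∀ t t' : ℕ, t < t' → t' < s → d t' < d t)
    (hd1 : ∀ t < s, 1 ≤ d t)
    (ha : ∀ t < s, ∃ m : ℕ, 1 ≤ m ∧ m ≤ j - 1 ∧ a t = q ^ (r * d t) - q ^ (r * d t - m)) :
    IsDigitExpansion (powDiffDigits q r) s d a where
  strictAntiOn t _ t' ht' htt' := hmono t t' htt' ht'
  mem t ht := by
    obtain ⟨m, hm, hmj, hat⟩ := ha t ht
    exact hat ▸ pow_sub_pow_mem_powDiffDigits hq (hd1 t ht) hm (by omega)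

/-- Beyond the paper's range `j ≤ r`, this covers `j = r + 1`, where `R_d` gains the element
`q ^ (r * d) - q ^ (r * (d - 1))`. -/
theorem unmixedness_unique_representation_general
    {q r j s s' : ℕ} {d a d' a' : ℕ → ℕ} (hq : 2 ≤ q) (hjr : j ≤ r + 1)
    (hmono : ∀ t t' : ℕ, t < t' → t' < s → d t' < d t)
    (hmono' : ∀ t t' : ℕ, t < t' → t' < s' → d' t' < d' t)
    (hd1 : ∀ t < s, 1 ≤ d t)
    (hd1' : ∀ t < s', 1 ≤ d' t)
    (ha : ∀ t < s, ∃ m : ℕ, 1 ≤ m ∧ m ≤ j - 1 ∧ a t = q ^ (r * d t) - q ^ (r * d t - m))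
    (ha' : ∀ t < s', ∃ m : ℕ, 1 ≤ m ∧ m ≤ j - 1 ∧ a' t = q ^ (r * d' t) - q ^ (r * d' t - m))
    (hsum : ∑ t ∈ Finset.range s, a t = ∑ t ∈ Finset.range s', a' t) :
    s = s' ∧ ∀ t < s, d t = d' t ∧ a t = a' t :=
  (isSeparatedDigitSystem_powDiffDigits hq r).eq_of_sum_eq
    (isDigitExpansion_powDiffDigits (by omega) hjr hmono hd1 ha)
    (isDigitExpansion_powDiffDigits (by omega) hjr hmono' hd1' ha') hsum

/-- Fix integers `q ≥ 2`, `r ≥ 2` and `2 ≤ j ≤ r`.  For `d ≥ 1` let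
`R_d = {q^(rd) - q^(rd-1), …, q^(rd) - q^(rd-(j-1))}`.  Every natural number `k` admits at
most one representation `k = a 0 + ⋯ + a (s-1)` with strictly decreasing `d 0 > ⋯ > d (s-1) ≥ 1`
and `a t ∈ R_(d t)` for all `t < s`. -/
theorem unmixedness_unique_representation
    (q r j : ℕ) (hq : 2 ≤ q) (hr : 2 ≤ r) (hj : 2 ≤ j) (hjr : j ≤ r)
    (k s s' : ℕ) (d a d' a' : ℕ → ℕ)
    (hmono : ∀ t t' : ℕ, t < t' → t' < s → d t' < d t)
    (hmono' : ∀ t t' : ℕ, t < t' → t' < s' → d' t' < d' t)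
    (hd1 : ∀ t < s, 1 ≤ d t)
    (hd1' : ∀ t < s', 1 ≤ d' t)
    (ha : ∀ t < s, ∃ m : ℕ, 1 ≤ m ∧ m ≤ j - 1 ∧ a t = q ^ (r * d t) - q ^ (r * d t - m))
    (ha' : ∀ t < s', ∃ m : ℕ, 1 ≤ m ∧ m ≤ j - 1 ∧ a' t = q ^ (r * d' t) - q ^ (r * d' t - m))
    (hsum : ∑ t ∈ Finset.range s, a t = k)
    (hsum' : ∑ t ∈ Finset.range s', a' t = k) :
    s = s' ∧ ∀ t < s, d t = d' t ∧ a t = a' t :=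
  unmixedness_unique_representation_general hq (by omega) hmono hmono' hd1 hd1' ha ha'
    (hsum.trans hsum'.symm)
end
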